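/- (Analytic counterpart of Theorem 2.1 of the paper — the local p²-correspondence relations — with the proportionality constant ω made explicit.) Let g ≥ 1, let p be an odd positive integer, let n ≥ 1 be an integer coprime to p, and set N = 2np. Let Ω ∈ 𝔥_g and define a_w := θ_N[0,w](0, (1/N)Ω) and b_w := θ_N[0,w](0, (1/(p²N))Ω) for w ∈ ℤ^g. Then for all x, w ∈ ℤ^g: ∑_{t ∈ {0,1}^g} a_{x+(N/2)t} · a_{p·w+(N/2)t} = p^{−g} · ∑_{u ∈ {0,…,2p−1}^g} a_{x+pn·u} · b_{w+n·u}. (In the paper's notation, x plays the role of v, y = pw, the index set Z_{2p} is embedded in Z_{2np} by u ↦ nu, and b_w corresponds to the σ²-twisted theta null value a_w^{σ²}.) -/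

import Mathlib

open scoped BigOperators

/-- The `n`-th term of the series defining the theta function with rational
characteristics `θ_l[ε₁,ε₂](z,Ω)` (equation (1) of the paper). -/
noncomputable def thetaTerm (g l : ℕ) (ε₁ ε₂ : Fin g → ℤ) (z : Fin g → ℂ)
    (Ω : Matrix (Fin g) (Fin g) ℂ) (n : Fin g → ℤ) : ℂ :=
  Complex.exp (↑Real.pi * Complex.I *
      (∑ i, ∑ j, ((n i : ℂ) + (ε₁ i : ℂ) / (l : ℂ)) * Ω i j *
        ((n j : ℂ) + (ε₁ j : ℂ) / (l : ℂ)))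
    + 2 * ↑Real.pi * Complex.I *
      (∑ i, ((n i : ℂ) + (ε₁ i : ℂ) / (l : ℂ)) * (z i + (ε₂ i : ℂ) / (l : ℂ))))

/-- The theta function with rational characteristics `θ_l[ε₁,ε₂](z,Ω)`. -/
noncomputable def thetaChar (g l : ℕ) (ε₁ ε₂ : Fin g → ℤ) (z : Fin g → ℂ)
    (Ω : Matrix (Fin g) (Fin g) ℂ) : ℂ :=
  ∑' n : Fin g → ℤ, thetaTerm g l ε₁ ε₂ z Ω n

/-- `Ω` belongs to the Siegel upper half space `𝔥_g`: it is symmetric and its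
imaginary part is positive definite. -/
def IsSiegel {g : ℕ} (Ω : Matrix (Fin g) (Fin g) ℂ) : Prop :=
  Ω.IsSymm ∧ (Matrix.of fun i j => (Ω i j).im).PosDef

/-- The level-`N` theta null values `a_w := θ_N[0,w](0, Ω/N)`. -/
noncomputable def thetaNull (g N : ℕ) (Ω : Matrix (Fin g) (Fin g) ℂ)
    (w : Fin g → ℤ) : ℂ :=
  thetaChar g N 0 w 0 ((1 / (N : ℂ)) • Ω)

/-!
Expand each side into a double series over `(m, k) ∈ ℤ^g × ℤ^g`. Shifting a characteristic
multiplies the `m`-th term of a theta series by a root of unity, so by orthogonality the finite sum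
over `t` keeps only the pairs with `M ∣ m + k`, and the finite sum over `u` only those with
`M * p ∣ p * m + k`, where `M = 2` in the paper. The latter condition forces `k = p * k'` with
`M ∣ m + k'`, and in the series with matrix `p⁻² Ω` the substitution `k = p * k'` turns the
characteristic `w` into `p * w` and removes the factor `p⁻²`. The two orthogonality factors `M ^ g`
and `(M * p) ^ g` account for `p ^ (-g)`.
-/

section Summability

open scoped Matrix Real

variable {ι : Type*} [Fintype ι]

open scoped MatrixOrder in
lemma exists_pos_mul_dotProduct_self_le {Y : Matrix ι ι ℝ} (hY : Y.PosDef) :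
    ∃ c > 0, ∀ v : ι → ℝ, c * (v ⬝ᵥ v) ≤ v ⬝ᵥ Y *ᵥ v := by
  classical
  cases isEmpty_or_nonempty ι
  · exact ⟨1, one_pos, by simp⟩
  obtain ⟨c, hc, hcY⟩ := (CFC.exists_pos_algebraMap_le_iff hY.isHermitian).mpr
    fun _ ↦ hY.isStrictlyPositive.spectrum_pos
  refine ⟨c, hc, fun v ↦ ?_⟩
  have h := (Matrix.le_iff.mp hcY).dotProduct_mulVec_nonneg v
  simpa [Matrix.sub_mulVec, Algebra.algebraMap_eq_smul_one, Matrix.smul_mulVec] using h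

lemma summable_prod_apply_of_nonneg {α : ι → Type*} {f : ∀ i, α i → ℝ}
    (hf₀ : ∀ i a, 0 ≤ f i a) (hf : ∀ i, Summable (f i)) :
    Summable fun m : ∀ i, α i ↦ ∏ i, f i (m i) := by
  classical
  refine summable_of_sum_le (c := ∏ i, ∑' a, f i a)
    (fun m ↦ Finset.prod_nonneg fun i _ ↦ hf₀ i (m i)) fun s ↦ ?_
  let box : Finset (∀ i, α i) := Fintype.piFinset fun i ↦ s.image (· i)
  have s_subset_box : s ⊆ box := fun m hm ↦
    Fintype.mem_piFinset.mpr fun i ↦ Finset.mem_image_of_mem (· i) hm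
  calc ∑ m ∈ s, ∏ i, f i (m i)
      ≤ ∑ m ∈ box, ∏ i, f i (m i) :=
        Finset.sum_le_sum_of_subset_of_nonneg s_subset_box
          fun m _ _ ↦ Finset.prod_nonneg fun i _ ↦ hf₀ i (m i)
    _ = ∏ i, ∑ a ∈ s.image (· i), f i a := (Finset.prod_univ_sum _ _).symm
    _ ≤ ∏ i, ∑' a, f i a :=
        Finset.prod_le_prod (fun i _ ↦ Finset.sum_nonneg fun a _ ↦ hf₀ i a)
          fun i _ ↦ (hf i).sum_le_tsum _ fun a _ ↦ hf₀ i a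

lemma summable_exp_neg_pi_mul_sq_add {c : ℝ} (hc : 0 < c) (e y : ℝ) :
    Summable fun n : ℤ ↦ Real.exp (-π * (c * (n + e) ^ 2 + 2 * ((n + e) * y))) := by
  have hsum : Summable fun n : ℤ ↦
      ‖jacobiTheta₂_term n ((c * e + y : ℝ) * Complex.I) (c * Complex.I)‖ :=
    ((summable_jacobiTheta₂_term_iff _ _).mpr (by simpa using hc)).norm
  refine (hsum.mul_left (Real.exp (-π * (c * e ^ 2 + 2 * (e * y))))).congr fun n ↦ ?_
  rw [norm_jacobiTheta₂_term, ← Real.exp_add, Complex.im_ofReal_mul, Complex.im_ofReal_mul,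
    Complex.I_im]
  ring_nf

lemma summable_exp_neg_pi_mul_quadratic {Y : Matrix ι ι ℝ} (hY : Y.PosDef) (e y : ι → ℝ) :
    Summable fun m : ι → ℤ ↦
      Real.exp (-π * (((fun i ↦ m i + e i) ⬝ᵥ Y *ᵥ fun i ↦ m i + e i) +
        2 * ((fun i ↦ m i + e i) ⬝ᵥ y))) := by
  obtain ⟨c, hc, hcY⟩ := exists_pos_mul_dotProduct_self_le hY
  refine (summable_prod_apply_of_nonneg (fun _ _ ↦ (Real.exp_pos _).le)
    fun i ↦ summable_exp_neg_pi_mul_sq_add hc (e i) (y i)).of_nonneg_of_le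
    (fun _ ↦ (Real.exp_pos _).le) fun m ↦ ?_
  have separate : ∑ i, (c * (m i + e i) ^ 2 + 2 * ((m i + e i) * y i)) =
      c * ((fun i ↦ m i + e i) ⬝ᵥ fun i ↦ m i + e i) + 2 * ((fun i ↦ m i + e i) ⬝ᵥ y) := by
    simp only [dotProduct, Finset.sum_add_distrib, Finset.mul_sum, sq]
  rw [← Real.exp_sum, ← Finset.mul_sum, separate, Real.exp_le_exp, neg_mul, neg_mul,
    neg_le_neg_iff]
  gcongr
  exact hcY _

lemma IsSiegel.smul {g : ℕ} {Ω : Matrix (Fin g) (Fin g) ℂ} (hΩ : IsSiegel Ω) {r : ℝ}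
    (hr : 0 < r) : IsSiegel ((r : ℂ) • Ω) := by
  refine ⟨hΩ.1.smul _, ?_⟩
  convert hΩ.2.smul hr using 1
  ext i j
  simp

lemma norm_thetaTerm (g l : ℕ) (ε₁ ε₂ : Fin g → ℤ) (z : Fin g → ℂ)
    (Ω : Matrix (Fin g) (Fin g) ℂ) (m : Fin g → ℤ) :
    ‖thetaTerm g l ε₁ ε₂ z Ω m‖ =
      Real.exp (-π * (((fun i ↦ (m i + ε₁ i / l : ℝ)) ⬝ᵥ
          (Matrix.of fun i j ↦ (Ω i j).im) *ᵥ fun i ↦ (m i + ε₁ i / l : ℝ)) +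
        2 * ((fun i ↦ (m i + ε₁ i / l : ℝ)) ⬝ᵥ fun i ↦ (z i).im))) := by
  have real_shift (i : Fin g) : (m i + ε₁ i / l : ℂ) = ((m i + ε₁ i / l : ℝ) : ℂ) := by
    push_cast; rfl
  have real_char (i : Fin g) : (ε₂ i / l : ℂ) = ((ε₂ i / l : ℝ) : ℂ) := by push_cast; rfl
  have im_quadratic : (∑ i, ∑ j, (m i + ε₁ i / l : ℂ) * Ω i j * (m j + ε₁ j / l : ℂ)).im =
      (fun i ↦ (m i + ε₁ i / l : ℝ)) ⬝ᵥ
        (Matrix.of fun i j ↦ (Ω i j).im) *ᵥ fun i ↦ (m i + ε₁ i / l : ℝ) := by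
    simp only [real_shift, Complex.im_sum, Complex.im_mul_ofReal, Complex.im_ofReal_mul,
      dotProduct, Matrix.mulVec, Matrix.of_apply, Finset.mul_sum, mul_assoc]
  have im_linear : (∑ i, (m i + ε₁ i / l : ℂ) * (z i + ε₂ i / l)).im =
      (fun i ↦ (m i + ε₁ i / l : ℝ)) ⬝ᵥ fun i ↦ (z i).im := by
    simp only [real_shift, real_char, Complex.im_sum, Complex.im_ofReal_mul, Complex.add_im,
      Complex.ofReal_im, add_zero, dotProduct]
  have re_exponent (a b : ℂ) : (π * Complex.I * a + 2 * π * Complex.I * b).re =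
      -π * (a.im + 2 * b.im) := by
    have factor : π * Complex.I * a + 2 * π * Complex.I * b =
        π * ((a + (2 : ℝ) * b) * Complex.I) := by
      push_cast; ring
    rw [factor, Complex.re_ofReal_mul, Complex.mul_I_re, Complex.add_im, Complex.im_ofReal_mul,
      mul_neg, neg_mul]
  rw [thetaTerm, Complex.norm_exp, re_exponent, im_quadratic, im_linear]

lemma IsSiegel.summable_norm_thetaTerm {g : ℕ} {Ω : Matrix (Fin g) (Fin g) ℂ} (hΩ : IsSiegel Ω)
    (l : ℕ) (ε₁ ε₂ : Fin g → ℤ) (z : Fin g → ℂ) :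
    Summable fun m ↦ ‖thetaTerm g l ε₁ ε₂ z Ω m‖ := by
  simp only [norm_thetaTerm]
  exact summable_exp_neg_pi_mul_quadratic hΩ.2 _ _

end Summability

section Orthogonality

variable {K : Type*} [Field K] {ζ : K} {M : ℕ}

lemma sum_zpow_mul_eq_ite (hζ : IsPrimitiveRoot ζ M) (s : ℤ) :
    ∑ t : Fin M, ζ ^ (s * (t : ℕ)) = if (M : ℤ) ∣ s then (M : K) else 0 := by
  simp only [zpow_mul, zpow_natCast]
  rw [Fin.sum_univ_eq_sum_range (fun t ↦ (ζ ^ s) ^ t) M]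
  split_ifs with hs
  · simp [(hζ.zpow_eq_one_iff_dvd s).mpr hs]
  · have hζs : (ζ ^ s) ^ M = 1 := by
      rw [← zpow_natCast, zpow_comm, zpow_natCast, hζ.pow_eq_one, one_zpow]
    rw [geom_sum_eq (mt (hζ.zpow_eq_one_iff_dvd s).mp hs), hζs, sub_self, zero_div]

lemma sum_prod_zpow_mul_eq_ite {ι : Type*} [Fintype ι] [DecidableEq ι] (hζ : IsPrimitiveRoot ζ M)
    (s : ι → ℤ) [Decidable (∀ i, (M : ℤ) ∣ s i)] :
    ∑ t : ι → Fin M, ∏ i, ζ ^ (s i * (t i : ℕ)) =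
      if ∀ i, (M : ℤ) ∣ s i then (M : K) ^ Fintype.card ι else 0 := by
  rw [← Fintype.prod_sum fun i (t : Fin M) ↦ ζ ^ (s i * (t : ℕ))]
  simp only [sum_zpow_mul_eq_ite hζ, Finset.prod_ite_zero, Finset.mem_univ, true_imp_iff,
    Finset.prod_const, Finset.card_univ]

end Orthogonality

/-- The lattice of pairs `(m, k)` of integer vectors with `c * m + k ≡ 0` modulo `M`, which is what
orthogonality of characters leaves of a double theta series. -/
def congruencePairs (ι : Type*) (M c : ℕ) : Set ((ι → ℤ) × (ι → ℤ)) :=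
  {mk | ∀ i, (M : ℤ) ∣ c * mk.1 i + mk.2 i}

lemma tsum_congruencePairs_mul {ι α : Type*} [AddCommMonoid α] [TopologicalSpace α] {p : ℕ}
    (hp : p ≠ 0) (M c : ℕ) (F : (ι → ℤ) × (ι → ℤ) → α) :
    ∑' mk : congruencePairs ι (M * p) (p * c), F mk =
      ∑' mk : congruencePairs ι M c, F (mk.1.1, fun i ↦ p * mk.1.2 i) := by
  have hp' : (p : ℤ) ≠ 0 := Nat.cast_ne_zero.mpr hp
  have dvd_scale_iff (a b : ℤ) :
      ((M * p : ℕ) : ℤ) ∣ (p * c : ℕ) * a + p * b ↔ (M : ℤ) ∣ c * a + b := by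
    push_cast
    rw [mul_assoc, ← mul_add, mul_comm (M : ℤ), mul_dvd_mul_iff_left hp']
  let scale (mk : congruencePairs ι M c) : congruencePairs ι (M * p) (p * c) :=
    ⟨(mk.1.1, fun i ↦ p * mk.1.2 i), fun i ↦ (dvd_scale_iff _ _).mpr (mk.2 i)⟩
  have scale_injective : scale.Injective := by
    rintro ⟨⟨m, k⟩, h⟩ ⟨⟨m', k'⟩, h'⟩ heq
    have heq' := congrArg Subtype.val heq
    simp only [scale, Prod.mk.injEq, funext_iff, mul_right_inj' hp'] at heq'
    exact Subtype.ext (Prod.ext (funext heq'.1) (funext heq'.2))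
  have scale_surjective : scale.Surjective := by
    rintro ⟨⟨m, k⟩, h⟩
    have hpk (i : ι) : (p : ℤ) ∣ k i := by
      have hpm : (p : ℤ) ∣ (p * c : ℕ) * m i :=
        (Int.natCast_dvd_natCast.mpr (dvd_mul_right p c)).mul_right _
      exact (dvd_add_right hpm).mp
        ((Int.natCast_dvd_natCast.mpr (dvd_mul_left p M)).trans (h i))
    choose k' hk' using hpk
    obtain rfl : k = fun i ↦ p * k' i := funext hk'
    exact ⟨⟨(m, k'), fun i ↦ (dvd_scale_iff _ _).mp (h i)⟩, rfl⟩
  exact ((Equiv.ofBijective scale ⟨scale_injective, scale_surjective⟩).tsum_eq _).symm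

section ThetaIdentities

variable {g : ℕ}

lemma thetaTerm_zero_add (l : ℕ) (w v : Fin g → ℤ) (z : Fin g → ℂ)
    (Ω : Matrix (Fin g) (Fin g) ℂ) (m : Fin g → ℤ) :
    thetaTerm g l 0 (fun i ↦ w i + v i) z Ω m =
      thetaTerm g l 0 w z Ω m *
        ∏ i, Complex.exp (2 * Real.pi * Complex.I / l) ^ (m i * v i) := by
  simp only [thetaTerm, ← Complex.exp_int_mul, ← Complex.exp_sum, ← Complex.exp_add, add_assoc]
  congr 2
  rw [Finset.mul_sum, Finset.mul_sum, ← Finset.sum_add_distrib]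
  refine Finset.sum_congr rfl fun i _ ↦ ?_
  push_cast
  simp only [Pi.zero_apply, Int.cast_zero, zero_div, add_zero]
  ring

lemma thetaTerm_inv_sq_smul_mul {p : ℕ} (hp : p ≠ 0) (l : ℕ) (w : Fin g → ℤ) (z : Fin g → ℂ)
    (Ω : Matrix (Fin g) (Fin g) ℂ) (k : Fin g → ℤ) :
    thetaTerm g l 0 w z (((p : ℂ) ^ 2)⁻¹ • Ω) (fun i ↦ p * k i) =
      thetaTerm g l 0 (fun i ↦ p * w i) ((p : ℂ) • z) Ω k := by
  have hp' : (p : ℂ) ≠ 0 := Nat.cast_ne_zero.mpr hp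
  rw [thetaTerm, thetaTerm]
  congr 3
  · refine Finset.sum_congr rfl fun i _ ↦ Finset.sum_congr rfl fun j _ ↦ ?_
    simp only [Int.cast_mul, Int.cast_natCast, Pi.zero_apply, Int.cast_zero, zero_div, add_zero,
      Matrix.smul_apply, smul_eq_mul]
    field_simp
  · refine Finset.sum_congr rfl fun i _ ↦ ?_
    simp only [Int.cast_mul, Int.cast_natCast, Pi.zero_apply, Int.cast_zero, zero_div, add_zero,
      Pi.smul_apply, smul_eq_mul]
    ring

lemma sum_thetaTerm_mul_thetaTerm {N M h : ℕ} (hN : N ≠ 0) (hNM : N = h * M) (c : ℕ)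
    (x y : Fin g → ℤ) (z₁ z₂ : Fin g → ℂ) (Ω₁ Ω₂ : Matrix (Fin g) (Fin g) ℂ)
    (m k : Fin g → ℤ) :
    ∑ t : Fin g → Fin M,
      thetaTerm g N 0 (fun i ↦ x i + (c * h : ℕ) * (t i : ℕ)) z₁ Ω₁ m *
        thetaTerm g N 0 (fun i ↦ y i + h * (t i : ℕ)) z₂ Ω₂ k =
      if ∀ i, (M : ℤ) ∣ c * m i + k i then
        (M : ℂ) ^ g * (thetaTerm g N 0 x z₁ Ω₁ m * thetaTerm g N 0 y z₂ Ω₂ k) else 0 := by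
  have hζ := Complex.isPrimitiveRoot_exp N hN
  set ζ := Complex.exp (2 * Real.pi * Complex.I / N)
  have shift_eq_phase (t : Fin g → Fin M) :
      thetaTerm g N 0 (fun i ↦ x i + (c * h : ℕ) * (t i : ℕ)) z₁ Ω₁ m *
          thetaTerm g N 0 (fun i ↦ y i + h * (t i : ℕ)) z₂ Ω₂ k =
        thetaTerm g N 0 x z₁ Ω₁ m * thetaTerm g N 0 y z₂ Ω₂ k *
          ∏ i, (ζ ^ h) ^ ((c * m i + k i) * (t i : ℕ)) := by
    rw [thetaTerm_zero_add, thetaTerm_zero_add, mul_mul_mul_comm, ← Finset.prod_mul_distrib]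
    congr 1
    refine Finset.prod_congr rfl fun i _ ↦ ?_
    rw [← zpow_add₀ (hζ.ne_zero hN), ← zpow_natCast, ← zpow_mul]
    push_cast
    ring_nf
  rw [Finset.sum_congr rfl fun t _ ↦ shift_eq_phase t, ← Finset.mul_sum,
    sum_prod_zpow_mul_eq_ite (hζ.pow hN.bot_lt hNM) fun i ↦ c * m i + k i, Fintype.card_fin,
    mul_ite, mul_zero, mul_comm]

lemma sum_thetaChar_mul_thetaChar {N M h : ℕ} (hN : N ≠ 0) (hNM : N = h * M) (c : ℕ)
    (x y : Fin g → ℤ) (z₁ z₂ : Fin g → ℂ) {Ω₁ Ω₂ : Matrix (Fin g) (Fin g) ℂ}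
    (hΩ₁ : IsSiegel Ω₁) (hΩ₂ : IsSiegel Ω₂) :
    ∑ t : Fin g → Fin M,
      thetaChar g N 0 (fun i ↦ x i + (c * h : ℕ) * (t i : ℕ)) z₁ Ω₁ *
        thetaChar g N 0 (fun i ↦ y i + h * (t i : ℕ)) z₂ Ω₂ =
      (M : ℂ) ^ g * ∑' mk : congruencePairs (Fin g) M c,
        thetaTerm g N 0 x z₁ Ω₁ mk.1.1 * thetaTerm g N 0 y z₂ Ω₂ mk.1.2 := by
  have hs₁ (w) := hΩ₁.summable_norm_thetaTerm N 0 w z₁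
  have hs₂ (w) := hΩ₂.summable_norm_thetaTerm N 0 w z₂
  simp only [thetaChar, tsum_mul_tsum_of_summable_norm (hs₁ _) (hs₂ _)]
  rw [← Summable.tsum_finsetSum fun t _ ↦ summable_mul_of_summable_norm (hs₁ _) (hs₂ _),
    ← tsum_mul_left, tsum_subtype (congruencePairs (Fin g) M c) fun mk ↦
      (M : ℂ) ^ g * (thetaTerm g N 0 x z₁ Ω₁ mk.1 * thetaTerm g N 0 y z₂ Ω₂ mk.2)]
  simp only [sum_thetaTerm_mul_thetaTerm hN hNM, congruencePairs, Set.indicator_apply,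
    Set.mem_ofPred_eq]

end ThetaIdentities

theorem local_p2_correspondence_general {g M n p : ℕ} (hM : 0 < M) (hn : 0 < n) (hp : 0 < p)
    {Ω₁ Ω₂ : Matrix (Fin g) (Fin g) ℂ} (hΩ₁ : IsSiegel Ω₁) (hΩ₂ : IsSiegel Ω₂)
    (z₁ z₂ : Fin g → ℂ) (x w : Fin g → ℤ) :
    ∑ t : Fin g → Fin M,
      thetaChar g (M * n * p) 0 (fun i ↦ x i + (n * p : ℕ) * (t i : ℕ)) z₁ Ω₁ *
        thetaChar g (M * n * p) 0 (fun i ↦ p * w i + (n * p : ℕ) * (t i : ℕ)) ((p : ℂ) • z₂) Ω₂ =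
      (p : ℂ) ^ (-(g : ℤ)) *
        ∑ u : Fin g → Fin (M * p),
          thetaChar g (M * n * p) 0 (fun i ↦ x i + (p * n : ℕ) * (u i : ℕ)) z₁ Ω₁ *
            thetaChar g (M * n * p) 0 (fun i ↦ w i + n * (u i : ℕ)) z₂
              (((p : ℂ) ^ 2)⁻¹ • Ω₂) := by
  have hN : M * n * p ≠ 0 := by positivity
  have hp' : (p : ℂ) ≠ 0 := Nat.cast_ne_zero.mpr hp.ne'
  have hr : 0 < ((p : ℝ) ^ 2)⁻¹ := by positivity
  have hΩ₂' : IsSiegel (((p : ℂ) ^ 2)⁻¹ • Ω₂) := by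
    simpa only [Complex.ofReal_inv, Complex.ofReal_pow, Complex.ofReal_natCast] using hΩ₂.smul hr
  have sum_over_t := sum_thetaChar_mul_thetaChar hN (by ring : M * n * p = n * p * M) 1
    x (fun i ↦ p * w i) z₁ ((p : ℂ) • z₂) hΩ₁ hΩ₂
  have sum_over_u := sum_thetaChar_mul_thetaChar hN (by ring : M * n * p = n * (M * p)) p
    x w z₁ z₂ hΩ₁ hΩ₂'
  have reindex := tsum_congruencePairs_mul hp.ne' M 1 fun mk ↦
    thetaTerm g (M * n * p) 0 x z₁ Ω₁ mk.1 *
      thetaTerm g (M * n * p) 0 w z₂ (((p : ℂ) ^ 2)⁻¹ • Ω₂) mk.2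
  rw [one_mul] at sum_over_t
  rw [mul_one] at reindex
  rw [sum_over_t, sum_over_u, reindex]
  simp only [thetaTerm_inv_sq_smul_mul hp.ne', zpow_neg, zpow_natCast, Nat.cast_mul, mul_pow]
  field_simp

/-- analytic counterpart of Theorem 2.1 of the paper — the local
p²-correspondence relations — with the proportionality constant ω made
explicit.  Here `N = 2np`, `a_w = θ_N[0,w](0, Ω/N)` and
`b_w = θ_N[0,w](0, Ω/(p²N))` plays the role of `a_w^{σ²}`. -/
theorem local_p2_correspondence (g : ℕ) (hg : 1 ≤ g) (p n : ℕ)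
    (hp : Odd p) (hp0 : 0 < p) (hn : 1 ≤ n) (hco : Nat.Coprime n p)
    (Ω : Matrix (Fin g) (Fin g) ℂ) (hΩ : IsSiegel Ω) (x w : Fin g → ℤ) :
    ∑ t : Fin g → Fin 2,
      thetaNull g (2 * n * p) Ω
          (fun i => x i + ((n * p : ℕ) : ℤ) * ((t i : ℕ) : ℤ)) *
        thetaNull g (2 * n * p) Ω
          (fun i => (p : ℤ) * w i + ((n * p : ℕ) : ℤ) * ((t i : ℕ) : ℤ))
    = (p : ℂ) ^ (-(g : ℤ)) *
        ∑ u : Fin g → Fin (2 * p),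
          thetaNull g (2 * n * p) Ω
              (fun i => x i + ((p * n : ℕ) : ℤ) * ((u i : ℕ) : ℤ)) *
            thetaChar g (2 * n * p) 0
              (fun i => w i + ((n : ℕ) : ℤ) * ((u i : ℕ) : ℤ)) 0
              ((1 / ((p ^ 2 * (2 * n * p) : ℕ) : ℂ)) • Ω) := by
  have hN : (0 : ℝ) < ((2 * n * p : ℕ) : ℝ)⁻¹ := by positivity
  have hΩN := hΩ.smul hN
  have h := local_p2_correspondence_general two_pos hn hp0 hΩN hΩN 0 0 x w
  simpa [thetaNull, smul_smul, mul_comm] using h
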